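/- The 5-dimensional nilpotent Lie algebra L_{5,9} = ⟨x₁,…,x₅ : [x₁,x₂]=x₃, [x₁,x₃]=x₄, [x₂,x₃]=x₅⟩ has Schur multiplier of dimension 3; with n = 5, m = 3, c = 3, this equals (1/2)(n−m−1)(n+m) − Σ_{i=2}^{min(n−m,c)} (n−m−i) − 1. -/

import Mathlib

open Module

/-- The dimension of the Schur multiplier `M(L) = (R ∩ F²)/[R,F]` of a Lie algebra `L`,
computed from a free presentation `π : FreeLieAlgebra K X → L` (with `R = ker π` and
`F² = [F,F]`). -/
noncomputable def lieSchurMultiplierDim (K : Type) [Field K] (X : Type) {L : Type}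
    [LieRing L] [LieAlgebra K L] (π : FreeLieAlgebra K X →ₗ⁅K⁆ L) : ℕ :=
  let F := FreeLieAlgebra K X
  let R : LieIdeal K F := π.ker
  let F2 : LieIdeal K F := LieModule.lowerCentralSeries K F F 1
  Module.finrank K
    (↥((R ⊓ F2 : LieIdeal K F) : Submodule K F) ⧸
      (Submodule.comap ((R ⊓ F2 : LieIdeal K F) : Submodule K F).subtype
        ((⁅R, (⊤ : LieIdeal K F)⁆ : LieIdeal K F) : Submodule K F)))

/-- `L` is nilpotent of nilpotency class exactly `c`: in the paper's notation
`γ_{c+1}(L) = 0` and `γ_k(L) ≠ 0` for `k ≤ c` (Mathlib's `lowerCentralSeries` is indexed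
so that `γ_{k+1}(L) = lowerCentralSeries K L L k`). -/
def lieNilpotencyClass (K : Type) [Field K] (L : Type) [LieRing L] [LieAlgebra K L]
    (c : ℕ) : Prop :=
  LieModule.lowerCentralSeries K L L c = ⊥ ∧
    ∀ k < c, LieModule.lowerCentralSeries K L L k ≠ ⊥

/-- The dimension of the derived subalgebra `L² = [L,L]`. -/
noncomputable def lieDerivedDim (K : Type) [Field K] (L : Type) [LieRing L]
    [LieAlgebra K L] : ℕ :=
  Module.finrank K
    ↥((LieModule.lowerCentralSeries K L L 1 : LieSubmodule K L L) : Submodule K L)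

/-- Rai's upper bound `(1/2)(n−m−1)(n+m) − Σ_{i=2}^{min(n−m,c)} (n−m−i)`. -/
def raiBound (n m c : ℕ) : ℤ :=
  ((n : ℤ) - m - 1) * ((n : ℤ) + m) / 2
    - ∑ i ∈ Finset.Icc 2 (min (n - m) c), ((n : ℤ) - m - (i : ℤ))


/-- The Lie algebra `L_{5,9} = ⟨x₁,…,x₅ : [x₁,x₂]=x₃, [x₁,x₃]=x₄, [x₂,x₃]=x₅⟩`,
all other brackets of generators trivial. -/
noncomputable def lieL59 (K : Type) [Field K] : Type :=
  let F := FreeLieAlgebra K (Fin 5)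
  let x : Fin 5 → F := FreeLieAlgebra.of K
  F ⧸ LieSubmodule.lieSpan K F
    {⁅x 0, x 1⁆ - x 2, ⁅x 0, x 2⁆ - x 3, ⁅x 1, x 2⁆ - x 4,
     ⁅x 0, x 3⁆, ⁅x 0, x 4⁆, ⁅x 1, x 3⁆, ⁅x 1, x 4⁆, ⁅x 2, x 3⁆, ⁅x 2, x 4⁆, ⁅x 3, x 4⁆}

noncomputable instance (K : Type) [Field K] : LieRing (lieL59 K) := by
  unfold lieL59; infer_instance
noncomputable instance (K : Type) [Field K] : LieAlgebra K (lieL59 K) := by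
  unfold lieL59; infer_instance

/-- Concrete model of `L_{5,9}`. -/
def ModelL (K : Type) : Type := Fin 5 → K

/-- Concrete model of the cover: free nilpotent of class 4 on two generators. -/
def ModelE (K : Type) : Type := Fin 8 → K

set_option linter.unusedSectionVars false

section models
variable (K : Type) [Field K]

instance : AddCommGroup (ModelL K) := inferInstanceAs (AddCommGroup (Fin 5 → K))
instance : Module K (ModelL K) := inferInstanceAs (Module K (Fin 5 → K))
instance : AddCommGroup (ModelE K) := inferInstanceAs (AddCommGroup (Fin 8 → K))
instance : Module K (ModelE K) := inferInstanceAs (Module K (Fin 8 → K))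

variable {K}

@[ext] theorem ModelL.ext' {u v : ModelL K} (h0 : u 0 = v 0) (h1 : u 1 = v 1) (h2 : u 2 = v 2)
    (h3 : u 3 = v 3) (h4 : u 4 = v 4) : u = v := by
  funext i; fin_cases i <;> assumption

@[ext] theorem ModelE.ext' {u v : ModelE K} (h0 : u 0 = v 0) (h1 : u 1 = v 1) (h2 : u 2 = v 2)
    (h3 : u 3 = v 3) (h4 : u 4 = v 4) (h5 : u 5 = v 5) (h6 : u 6 = v 6) (h7 : u 7 = v 7) :
    u = v := by
  funext i; fin_cases i <;> assumption

@[simp] theorem ModelL.add_apply (u v : ModelL K) (i : Fin 5) : (u + v) i = u i + v i := rfl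
@[simp] theorem ModelL.sub_apply (u v : ModelL K) (i : Fin 5) : (u - v) i = u i - v i := rfl
@[simp] theorem ModelL.zero_apply (i : Fin 5) : (0 : ModelL K) i = 0 := rfl
@[simp] theorem ModelL.smul_apply (t : K) (v : ModelL K) (i : Fin 5) : (t • v) i = t * v i := rfl
@[simp] theorem ModelE.add_apply (u v : ModelE K) (i : Fin 8) : (u + v) i = u i + v i := rfl
@[simp] theorem ModelE.zero_apply (i : Fin 8) : (0 : ModelE K) i = 0 := rfl
@[simp] theorem ModelE.smul_apply (t : K) (v : ModelE K) (i : Fin 8) : (t • v) i = t * v i := rfl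

/-- Build an element of the model from coordinates. -/
def ModelL.mk (a b c d e : K) : ModelL K := ![a, b, c, d, e]

/-- Build an element of the cover from coordinates. -/
def ModelE.mk (a b c d e f g h : K) : ModelE K := ![a, b, c, d, e, f, g, h]

section
variable (a b c d e f g h : K)
@[simp] theorem ModelL.mk0 : ModelL.mk a b c d e 0 = a := rfl
@[simp] theorem ModelL.mk1 : ModelL.mk a b c d e 1 = b := rfl
@[simp] theorem ModelL.mk2 : ModelL.mk a b c d e 2 = c := rfl
@[simp] theorem ModelL.mk3 : ModelL.mk a b c d e 3 = d := rfl
@[simp] theorem ModelL.mk4 : ModelL.mk a b c d e 4 = e := rfl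
@[simp] theorem ModelE.mk0 : ModelE.mk a b c d e f g h 0 = a := rfl
@[simp] theorem ModelE.mk1 : ModelE.mk a b c d e f g h 1 = b := rfl
@[simp] theorem ModelE.mk2 : ModelE.mk a b c d e f g h 2 = c := rfl
@[simp] theorem ModelE.mk3 : ModelE.mk a b c d e f g h 3 = d := rfl
@[simp] theorem ModelE.mk4 : ModelE.mk a b c d e f g h 4 = e := rfl
@[simp] theorem ModelE.mk5 : ModelE.mk a b c d e f g h 5 = f := rfl
@[simp] theorem ModelE.mk6 : ModelE.mk a b c d e f g h 6 = g := rfl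
@[simp] theorem ModelE.mk7 : ModelE.mk a b c d e f g h 7 = h := rfl
end

instance : Bracket (ModelL K) (ModelL K) where
  bracket u v := ModelL.mk 0 0 (u 0 * v 1 - u 1 * v 0) (u 0 * v 2 - u 2 * v 0)
    (u 1 * v 2 - u 2 * v 1)

instance : Bracket (ModelE K) (ModelE K) where
  bracket u v := ModelE.mk 0 0 (u 0 * v 1 - u 1 * v 0) (u 0 * v 2 - u 2 * v 0)
    (u 1 * v 2 - u 2 * v 1) (u 0 * v 3 - u 3 * v 0)
    ((u 0 * v 4 - u 4 * v 0) + (u 1 * v 3 - u 3 * v 1)) (u 1 * v 4 - u 4 * v 1)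

theorem ModelL.lie_def (u v : ModelL K) : ⁅u, v⁆ =
    ModelL.mk 0 0 (u 0 * v 1 - u 1 * v 0) (u 0 * v 2 - u 2 * v 0)
    (u 1 * v 2 - u 2 * v 1) := rfl

theorem ModelE.lie_def (u v : ModelE K) : ⁅u, v⁆ =
    ModelE.mk 0 0 (u 0 * v 1 - u 1 * v 0) (u 0 * v 2 - u 2 * v 0)
    (u 1 * v 2 - u 2 * v 1) (u 0 * v 3 - u 3 * v 0)
    ((u 0 * v 4 - u 4 * v 0) + (u 1 * v 3 - u 3 * v 1)) (u 1 * v 4 - u 4 * v 1) := rfl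

instance : LieRing (ModelL K) where
  add_lie u v w := by ext <;> simp [ModelL.lie_def] <;> ring
  lie_add u v w := by ext <;> simp [ModelL.lie_def] <;> ring
  lie_self u := by ext <;> simp [ModelL.lie_def] <;> ring
  leibniz_lie u v w := by ext <;> simp [ModelL.lie_def] <;> ring

instance : LieAlgebra K (ModelL K) where
  lie_smul t u v := by ext <;> simp [ModelL.lie_def] <;> ring

instance : LieRing (ModelE K) where
  add_lie u v w := by ext <;> simp [ModelE.lie_def] <;> ring
  lie_add u v w := by ext <;> simp [ModelE.lie_def] <;> ring
  lie_self u := by ext <;> simp [ModelE.lie_def] <;> ring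
  leibniz_lie u v w := by ext <;> simp [ModelE.lie_def] <;> ring

instance : LieAlgebra K (ModelE K) where
  lie_smul t u v := by ext <;> simp [ModelE.lie_def] <;> ring

/-- The projection of the cover onto the model. -/
def projEL : ModelE K →ₗ⁅K⁆ ModelL K where
  toFun v := ModelL.mk (v 0) (v 1) (v 2) (v 3) (v 4)
  map_add' u v := by ext <;> simp
  map_smul' t v := by ext <;> simp
  map_lie' {u v} := by ext <;> simp [ModelL.lie_def, ModelE.lie_def]

theorem projEL_apply (v : ModelE K) : projEL v = ModelL.mk (v 0) (v 1) (v 2) (v 3) (v 4) := rfl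

/-- The universal property of the cover. -/
theorem exists_hom_of_central {Q : Type} [LieRing Q] [LieAlgebra K Q] (a b : Q)
    (h5 : ∀ y : Q, ⁅y, ⁅a, ⁅a, ⁅a, b⁆⁆⁆⁆ = 0) (h6 : ∀ y : Q, ⁅y, ⁅a, ⁅b, ⁅a, b⁆⁆⁆⁆ = 0)
    (h7 : ∀ y : Q, ⁅y, ⁅b, ⁅b, ⁅a, b⁆⁆⁆⁆ = 0) :
    ∃ ψ : ModelE K →ₗ⁅K⁆ Q, ∀ v : ModelE K, ψ v = v 0 • a + v 1 • b + v 2 • ⁅a, b⁆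
      + v 3 • ⁅a, ⁅a, b⁆⁆ + v 4 • ⁅b, ⁅a, b⁆⁆ + v 5 • ⁅a, ⁅a, ⁅a, b⁆⁆⁆
      + v 6 • ⁅a, ⁅b, ⁅a, b⁆⁆⁆ + v 7 • ⁅b, ⁅b, ⁅a, b⁆⁆⁆ := by
  obtain ⟨c, hc⟩ : ∃ c, c = ⁅a, b⁆ := ⟨_, rfl⟩
  obtain ⟨d, hd⟩ : ∃ d, d = ⁅a, c⁆ := ⟨_, rfl⟩
  obtain ⟨e, he⟩ : ∃ e, e = ⁅b, c⁆ := ⟨_, rfl⟩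
  obtain ⟨f, hf⟩ : ∃ f, f = ⁅a, d⁆ := ⟨_, rfl⟩
  obtain ⟨g, hg⟩ : ∃ g, g = ⁅a, e⁆ := ⟨_, rfl⟩
  obtain ⟨h, hh⟩ : ∃ h, h = ⁅b, e⁆ := ⟨_, rfl⟩
  simp only [← hc, ← hd, ← he, ← hf, ← hg, ← hh] at h5 h6 h7 ⊢
  have sk : ∀ x y : Q, ⁅x, y⁆ = -⁅y, x⁆ := fun x y => (lie_skew x y).symm
  have h5' : ∀ y : Q, ⁅f, y⁆ = 0 := fun y => by rw [sk, h5, neg_zero]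
  have h6' : ∀ y : Q, ⁅g, y⁆ = 0 := fun y => by rw [sk, h6, neg_zero]
  have h7' : ∀ y : Q, ⁅h, y⁆ = 0 := fun y => by rw [sk, h7, neg_zero]
  have hbd : ⁅b, d⁆ = g := by
    have := leibniz_lie a b c
    rw [← he, ← hc, ← hd, ← hg, lie_self, zero_add] at this
    exact this.symm
  have hcd : ⁅c, d⁆ = 0 := by
    have := leibniz_lie a b d
    rw [hbd, ← hf, ← hc, h6, h5, add_zero] at this
    exact this.symm
  have hce : ⁅c, e⁆ = 0 := by
    have := leibniz_lie a b e
    rw [← hh, ← hg, ← hc, h7, h6, add_zero] at this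
    exact this.symm
  have hde : ⁅d, e⁆ = 0 := by
    have := leibniz_lie a c e
    rw [hce, ← hg, ← hd, h6, lie_zero, add_zero] at this
    exact this.symm
  have hba : ⁅b, a⁆ = -c := by rw [sk, hc]
  have hca : ⁅c, a⁆ = -d := by rw [sk, hd]
  have hcb : ⁅c, b⁆ = -e := by rw [sk, he]
  have hda : ⁅d, a⁆ = -f := by rw [sk, hf]
  have hdb : ⁅d, b⁆ = -g := by rw [sk, hbd]
  have hea : ⁅e, a⁆ = -g := by rw [sk, hg]
  have heb : ⁅e, b⁆ = -h := by rw [sk, hh]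
  have hdc : ⁅d, c⁆ = 0 := by rw [sk, hcd, neg_zero]
  have hec : ⁅e, c⁆ = 0 := by rw [sk, hce, neg_zero]
  have hed : ⁅e, d⁆ = 0 := by rw [sk, hde, neg_zero]
  refine ⟨{ toFun := fun v => v 0 • a + v 1 • b + v 2 • c + v 3 • d + v 4 • e + v 5 • f
                + v 6 • g + v 7 • h
            map_add' := fun u v => by simp only [ModelE.add_apply]; module
            map_smul' := fun t v => by
              simp only [ModelE.smul_apply, RingHom.id_apply]; module
            map_lie' := fun {u v} => ?_ }, fun v => rfl⟩
  simp only [lie_add, add_lie, lie_smul, smul_lie, h5, h6, h7, h5', h6', h7', hbd, hcd, hce, hde,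
    hba, hca, hcb, hda, hdb, hea, heb, hdc, hec, hed, ← hc, ← hd, ← he, ← hf, ← hg, ← hh,
    lie_self, smul_zero, ModelE.lie_def, ModelE.mk0, ModelE.mk1, ModelE.mk2, ModelE.mk3,
    ModelE.mk4, ModelE.mk5, ModelE.mk6, ModelE.mk7]
  module

end models

section proofs
variable {K : Type} [Field K]

/-- The defining relations of `lieL59`. -/
def relsL59 (K : Type) [Field K] : Set (FreeLieAlgebra K (Fin 5)) :=
  let F := FreeLieAlgebra K (Fin 5)
  let x : Fin 5 → F := FreeLieAlgebra.of K
  {⁅x 0, x 1⁆ - x 2, ⁅x 0, x 2⁆ - x 3, ⁅x 1, x 2⁆ - x 4,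
     ⁅x 0, x 3⁆, ⁅x 0, x 4⁆, ⁅x 1, x 3⁆, ⁅x 1, x 4⁆, ⁅x 2, x 3⁆, ⁅x 2, x 4⁆, ⁅x 3, x 4⁆}

theorem lieL59_quot (K : Type) [Field K] :
    ∃ q : FreeLieAlgebra K (Fin 5) →ₗ⁅K⁆ lieL59 K, Function.Surjective q ∧
      ∀ w, q w = 0 ↔ w ∈ LieSubmodule.lieSpan K (FreeLieAlgebra K (Fin 5)) (relsL59 K) := by
  let I := LieSubmodule.lieSpan K (FreeLieAlgebra K (Fin 5)) (relsL59 K)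
  let q : FreeLieAlgebra K (Fin 5) →ₗ⁅K⁆ (FreeLieAlgebra K (Fin 5) ⧸ I) :=
    { LieSubmodule.Quotient.mk' I with map_lie' := fun {x y} => rfl }
  have h : Function.Surjective q ∧ ∀ w, q w = 0 ↔ w ∈ I :=
    ⟨LieSubmodule.Quotient.surjective_mk' I, fun w => LieSubmodule.Quotient.mk_eq_zero I⟩
  exact ⟨q, h⟩

theorem exists_hom_of_rels {Q : Type} [LieRing Q] [LieAlgebra K Q] (x : Fin 5 → Q)
    (h01 : ⁅x 0, x 1⁆ = x 2) (h02 : ⁅x 0, x 2⁆ = x 3) (h12 : ⁅x 1, x 2⁆ = x 4)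
    (h03 : ⁅x 0, x 3⁆ = 0) (h04 : ⁅x 0, x 4⁆ = 0) (h13 : ⁅x 1, x 3⁆ = 0) (h14 : ⁅x 1, x 4⁆ = 0)
    (h23 : ⁅x 2, x 3⁆ = 0) (h24 : ⁅x 2, x 4⁆ = 0) (h34 : ⁅x 3, x 4⁆ = 0) :
    ∃ ψ : ModelL K →ₗ⁅K⁆ Q, ∀ v : ModelL K,
      ψ v = v 0 • x 0 + v 1 • x 1 + v 2 • x 2 + v 3 • x 3 + v 4 • x 4 := by
  have sk : ∀ {x y z : Q}, ⁅x, y⁆ = z → ⁅y, x⁆ = -z := fun {x y z} h => by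
    rw [← h, lie_skew]
  refine ⟨{ toFun := fun v => v 0 • x 0 + v 1 • x 1 + v 2 • x 2 + v 3 • x 3 + v 4 • x 4
            map_add' := fun u v => by simp only [ModelL.add_apply]; module
            map_smul' := fun t v => by
              simp only [ModelL.smul_apply, RingHom.id_apply]; module
            map_lie' := fun {u v} => ?_ }, fun v => rfl⟩
  simp only [lie_add, add_lie, lie_smul, smul_lie, h01, h02, h12, h03, h04, h13, h14, h23, h24,
    h34, sk h01, sk h02, sk h12, sk h03, sk h04, sk h13, sk h14, sk h23, sk h24, sk h34,
    lie_self, smul_zero, ModelL.lie_def, ModelL.mk0, ModelL.mk1, ModelL.mk2, ModelL.mk3,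
    ModelL.mk4]
  module

theorem lieL59_equiv (K : Type) [Field K] : Nonempty (ModelL K ≃ₗ⁅K⁆ lieL59 K) := by
  obtain ⟨q, hq, hq0⟩ := lieL59_quot K
  have hr : ∀ w ∈ relsL59 K, q w = 0 := fun w hw =>
    (hq0 w).2 (LieSubmodule.subset_lieSpan hw)
  let x : Fin 5 → FreeLieAlgebra K (Fin 5) := FreeLieAlgebra.of K
  have hr0 : ∀ i j, ⁅x i, x j⁆ ∈ relsL59 K → ⁅q (x i), q (x j)⁆ = 0 := fun i j h => by
    rw [← LieHom.map_lie]; exact hr _ h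
  have hr1 : ∀ i j k, ⁅x i, x j⁆ - x k ∈ relsL59 K → ⁅q (x i), q (x j)⁆ = q (x k) :=
    fun i j k h => by
      rw [← LieHom.map_lie, ← sub_eq_zero, ← map_sub]; exact hr _ h
  obtain ⟨g, hg⟩ := exists_hom_of_rels (K := K) (fun i => q (x i))
    (hr1 0 1 2 (by simp [relsL59, x])) (hr1 0 2 3 (by simp [relsL59, x]))
    (hr1 1 2 4 (by simp [relsL59, x])) (hr0 0 3 (by simp [relsL59, x]))
    (hr0 0 4 (by simp [relsL59, x])) (hr0 1 3 (by simp [relsL59, x]))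
    (hr0 1 4 (by simp [relsL59, x])) (hr0 2 3 (by simp [relsL59, x]))
    (hr0 2 4 (by simp [relsL59, x])) (hr0 3 4 (by simp [relsL59, x]))
  let X : Fin 5 → ModelL K := ![ModelL.mk 1 0 0 0 0, ModelL.mk 0 1 0 0 0, ModelL.mk 0 0 1 0 0,
    ModelL.mk 0 0 0 1 0, ModelL.mk 0 0 0 0 1]
  let θ := FreeLieAlgebra.lift K X
  have hθ : ∀ i, θ (x i) = X i := fun i => FreeLieAlgebra.lift_of_apply X i
  have hgθ : g.comp θ = q := by
    apply FreeLieAlgebra.hom_ext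
    intro i
    change g (θ (x i)) = q (x i)
    rw [hθ, hg]
    fin_cases i <;> simp [X]
  have hgθ' : ∀ w, g (θ w) = q w := fun w => by rw [← hgθ]; rfl
  have hθs : Function.Surjective θ := by
    intro v
    refine ⟨v 0 • x 0 + v 1 • x 1 + v 2 • x 2 + v 3 • x 3 + v 4 • x 4, ?_⟩
    simp only [map_add, map_smul, hθ]
    ext <;> simp [X]
  have hker : LieSubmodule.lieSpan K (FreeLieAlgebra K (Fin 5)) (relsL59 K) ≤ θ.ker := by
    rw [LieSubmodule.lieSpan_le]
    intro w hw
    change w ∈ θ.ker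
    rw [LieHom.mem_ker]
    have h0 := hθ 0
    have h1 := hθ 1
    have h2 := hθ 2
    have h3 := hθ 3
    have h4 := hθ 4
    simp only [relsL59, Set.mem_insert_iff, Set.mem_singleton_iff] at hw
    rcases hw with h | h | h | h | h | h | h | h | h | h <;> subst h <;>
    simp only [map_sub, LieHom.map_lie] <;>
    simp only [x] at h0 h1 h2 h3 h4 <;>
    simp only [h0, h1, h2, h3, h4] <;> ext <;> simp [X, ModelL.lie_def]
  refine ⟨LieEquiv.ofBijective g ⟨?_, ?_⟩⟩
  · rw [← LieHom.coe_toLinearMap, ← LinearMap.ker_eq_bot, LinearMap.ker_eq_bot']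
    intro v hv
    obtain ⟨w, rfl⟩ := hθs v
    have : q w = 0 := by rw [← hgθ']; exact hv
    exact LieHom.mem_ker.1 (hker ((hq0 w).1 this))
  · intro y
    obtain ⟨w, rfl⟩ := hq y
    exact ⟨θ w, hgθ' w⟩

/-- The ideal of `ModelL` of vectors with vanishing first two coordinates. -/
def idealL2 (K : Type) [Field K] : LieIdeal K (ModelL K) where
  carrier := {v | v 0 = 0 ∧ v 1 = 0}
  add_mem' := by rintro u v ⟨h, h'⟩ ⟨k, k'⟩; simp [h, h', k, k']
  zero_mem' := by simp
  smul_mem' := by rintro t v ⟨h, h'⟩; simp [h, h']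
  lie_mem := by intro u v _; constructor <;> simp [ModelL.lie_def]

/-- The ideal of `ModelL` of vectors with vanishing first three coordinates. -/
def idealL3 (K : Type) [Field K] : LieIdeal K (ModelL K) where
  carrier := {v | v 0 = 0 ∧ v 1 = 0 ∧ v 2 = 0}
  add_mem' := by rintro u v ⟨h, h', h''⟩ ⟨k, k', k''⟩; simp [h, h', h'', k, k', k'']
  zero_mem' := by simp
  smul_mem' := by rintro t v ⟨h, h', h''⟩; simp [h, h', h'']
  lie_mem := by
    rintro u v ⟨h, h', h''⟩
    refine ⟨?_, ?_, ?_⟩ <;> simp [ModelL.lie_def, h, h']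

theorem mem_idealL2 (v : ModelL K) : v ∈ idealL2 K ↔ v 0 = 0 ∧ v 1 = 0 := Iff.rfl
theorem mem_idealL3 (v : ModelL K) : v ∈ idealL3 K ↔ v 0 = 0 ∧ v 1 = 0 ∧ v 2 = 0 := Iff.rfl

theorem lie_mem_lcs_succ {L : Type} [LieRing L] [LieAlgebra K L] {k : ℕ} (u : L) {v : L}
    (h : v ∈ LieModule.lowerCentralSeries K L L k) :
    ⁅u, v⁆ ∈ LieModule.lowerCentralSeries K L L (k + 1) := by
  rw [LieModule.lowerCentralSeries_succ]
  exact LieSubmodule.lie_mem_lie (LieSubmodule.mem_top u) h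

theorem lie_mem_lcs_one {L : Type} [LieRing L] [LieAlgebra K L] (u v : L) :
    ⁅u, v⁆ ∈ LieModule.lowerCentralSeries K L L 1 :=
  lie_mem_lcs_succ u (by simp)

theorem lcs_one_modelL : LieModule.lowerCentralSeries K (ModelL K) (ModelL K) 1 = idealL2 K := by
  apply le_antisymm
  · rw [LieModule.lowerCentralSeries_succ, LieSubmodule.lie_le_iff]
    intro u _ v _
    rw [mem_idealL2]
    constructor <;> simp [ModelL.lie_def]
  · intro v hv
    rw [mem_idealL2] at hv
    have : v = ⁅(ModelL.mk 1 0 0 0 0 : ModelL K), ModelL.mk 0 (v 2) (v 3) 0 0⁆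
        + ⁅(ModelL.mk 0 1 0 0 0 : ModelL K), ModelL.mk 0 0 (v 4) 0 0⁆ := by
      ext <;> simp [ModelL.lie_def, hv.1, hv.2]
    rw [this]
    exact add_mem (lie_mem_lcs_one _ _) (lie_mem_lcs_one _ _)

theorem lcs_two_modelL_le :
    LieModule.lowerCentralSeries K (ModelL K) (ModelL K) 2 ≤ idealL3 K := by
  rw [LieModule.lowerCentralSeries_succ, LieSubmodule.lie_le_iff, lcs_one_modelL]
  intro u _ v hv
  rw [mem_idealL2] at hv
  rw [mem_idealL3]
  refine ⟨?_, ?_, ?_⟩ <;> simp [ModelL.lie_def, hv.1, hv.2]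

theorem lcs_three_modelL : LieModule.lowerCentralSeries K (ModelL K) (ModelL K) 3 = ⊥ := by
  rw [eq_bot_iff, LieModule.lowerCentralSeries_succ, LieSubmodule.lie_le_iff]
  intro u _ v hv
  have hv := lcs_two_modelL_le hv
  rw [mem_idealL3] at hv
  rw [LieSubmodule.mem_bot]
  ext <;> simp [ModelL.lie_def, hv.1, hv.2]

theorem lcs_two_modelL_ne : LieModule.lowerCentralSeries K (ModelL K) (ModelL K) 2 ≠ ⊥ := by
  intro h
  have : ⁅ModelL.mk (1 : K) 0 0 0 0, ⁅ModelL.mk (1 : K) 0 0 0 0, ModelL.mk (0 : K) 1 0 0 0⁆⁆ ∈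
      LieModule.lowerCentralSeries K (ModelL K) (ModelL K) 2 :=
    lie_mem_lcs_succ _ (lie_mem_lcs_one _ _)
  rw [h, LieSubmodule.mem_bot] at this
  have := congrArg (fun v : ModelL K => v 3) this
  simp [ModelL.lie_def] at this

theorem class_modelL : lieNilpotencyClass K (ModelL K) 3 := by
  refine ⟨lcs_three_modelL, fun k hk h => lcs_two_modelL_ne (K := K) ?_⟩
  rw [eq_bot_iff, ← h]
  exact LieModule.antitone_lowerCentralSeries K (ModelL K) (ModelL K) (by omega)

theorem derivedDim_modelL : lieDerivedDim K (ModelL K) = 3 := by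
  unfold lieDerivedDim
  rw [lcs_one_modelL]
  let f : ↥((idealL2 K : LieSubmodule K (ModelL K) (ModelL K)) : Submodule K (ModelL K)) ≃ₗ[K] (Fin 3 → K) :=
    { toFun := fun v => ![v.1 2, v.1 3, v.1 4]
      map_add' := fun u v => by ext i; fin_cases i <;> rfl
      map_smul' := fun t v => by ext i; fin_cases i <;> rfl
      invFun := fun v => ⟨ModelL.mk 0 0 (v 0) (v 1) (v 2), by
        change _ ∈ idealL2 K
        rw [mem_idealL2]; simp⟩
      left_inv := fun v => by
        have h : v.1 0 = 0 ∧ v.1 1 = 0 := v.2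
        apply Subtype.ext
        ext <;> simp [h.1, h.2]
      right_inv := fun v => by ext i; fin_cases i <;> simp }
  rw [f.finrank_eq]; simp

theorem lcs_map_equiv {L L' : Type} [LieRing L] [LieAlgebra K L] [LieRing L'] [LieAlgebra K L']
    (e : L ≃ₗ⁅K⁆ L') (k : ℕ) :
    ((LieModule.lowerCentralSeries K L' L' k : LieSubmodule K L' L') : Submodule K L') =
      Submodule.map (e.toLieHom : L →ₗ[K] L')
        ((LieModule.lowerCentralSeries K L L k : LieSubmodule K L L) : Submodule K L) := by
  rw [← LieIdeal.lowerCentralSeries_map_eq k (f := e.toLieHom) e.surjective]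
  exact LieIdeal.coe_map_of_surjective e.surjective

theorem derivedDim_equiv {L L' : Type} [LieRing L] [LieAlgebra K L] [LieRing L'] [LieAlgebra K L']
    (e : L ≃ₗ⁅K⁆ L') : lieDerivedDim K L' = lieDerivedDim K L := by
  unfold lieDerivedDim
  rw [lcs_map_equiv e]
  exact LinearEquiv.finrank_map_eq e.toLinearEquiv _

theorem class_equiv {L L' : Type} [LieRing L] [LieAlgebra K L] [LieRing L'] [LieAlgebra K L']
    (e : L ≃ₗ⁅K⁆ L') {c : ℕ} (h : lieNilpotencyClass K L c) : lieNilpotencyClass K L' c := by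
  have key : ∀ k, LieModule.lowerCentralSeries K L' L' k = ⊥ ↔
      LieModule.lowerCentralSeries K L L k = ⊥ := by
    intro k
    rw [← LieSubmodule.toSubmodule_eq_bot, ← LieSubmodule.toSubmodule_eq_bot,
      show (LieModule.lowerCentralSeries K L' L' k).toSubmodule = _ from lcs_map_equiv e k]
    exact Submodule.map_eq_bot_iff (e := e.toLinearEquiv)
  exact ⟨(key c).2 h.1, fun k hk h' => h.2 k hk ((key k).1 h')⟩

theorem schurDim_equiv {L L' : Type} [LieRing L] [LieAlgebra K L] [LieRing L'] [LieAlgebra K L']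
    (e : L ≃ₗ⁅K⁆ L') (X : Type) (π : FreeLieAlgebra K X →ₗ⁅K⁆ L) :
    lieSchurMultiplierDim K X (e.toLieHom.comp π) = lieSchurMultiplierDim K X π := by
  have : (e.toLieHom.comp π).ker = π.ker := by
    ext w
    rw [LieHom.mem_ker, LieHom.mem_ker]
    constructor
    · intro h
      exact e.injective (h.trans (map_zero e.toLieHom).symm)
    · intro h
      change e.toLieHom (π w) = 0
      rw [h, map_zero]
  unfold lieSchurMultiplierDim
  rw [this]

theorem schurDim_modelL (X : Type) (π : FreeLieAlgebra K X →ₗ⁅K⁆ ModelL K)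
    (hπ : Function.Surjective π) : lieSchurMultiplierDim K X π = 3 := by
  -- lift to the cover
  let s : ModelL K → ModelE K := fun v => ModelE.mk (v 0) (v 1) (v 2) (v 3) (v 4) 0 0 0
  have hs : ∀ v, projEL (s v) = v := fun v => by
    rw [projEL_apply]; ext <;> simp [s]
  let φ := FreeLieAlgebra.lift K (fun i => s (π (FreeLieAlgebra.of K i)))
  have hφ : projEL.comp φ = π := by
    apply FreeLieAlgebra.hom_ext
    intro i
    change projEL (φ _) = _
    rw [FreeLieAlgebra.lift_of_apply, hs]
  have hφ' : ∀ w, projEL (φ w) = π w := fun w => by rw [← hφ]; rfl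
  have hc0 : ∀ w, φ w 0 = π w 0 := fun w => by rw [← hφ', projEL_apply]; simp
  have hc1 : ∀ w, φ w 1 = π w 1 := fun w => by rw [← hφ', projEL_apply]; simp
  have hc2 : ∀ w, φ w 2 = π w 2 := fun w => by rw [← hφ', projEL_apply]; simp
  have hc3 : ∀ w, φ w 3 = π w 3 := fun w => by rw [← hφ', projEL_apply]; simp
  have hc4 : ∀ w, φ w 4 = π w 4 := fun w => by rw [← hφ', projEL_apply]; simp
  obtain ⟨a, ha⟩ := hπ (ModelL.mk 1 0 0 0 0)
  obtain ⟨b, hb⟩ := hπ (ModelL.mk 0 1 0 0 0)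
  -- the maximal central extension attached to the presentation
  let J : LieIdeal K (FreeLieAlgebra K X) := ⁅π.ker, (⊤ : LieIdeal K (FreeLieAlgebra K X))⁆
  let q : FreeLieAlgebra K X →ₗ⁅K⁆ (FreeLieAlgebra K X ⧸ J) :=
    { LieSubmodule.Quotient.mk' J with map_lie' := fun {x y} => rfl }
  have hq : Function.Surjective q := LieSubmodule.Quotient.surjective_mk' J
  have hq0 : ∀ w, q w = 0 ↔ w ∈ J := fun w => LieSubmodule.Quotient.mk_eq_zero J
  have hcen : ∀ w, π w = 0 → ∀ y : FreeLieAlgebra K X ⧸ J, ⁅y, q w⁆ = 0 := by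
    intro w hw y
    obtain ⟨y, rfl⟩ := hq y
    rw [← lie_skew, ← LieHom.map_lie, (hq0 _).2, neg_zero]
    exact LieSubmodule.lie_mem_lie (LieHom.mem_ker.2 hw) (LieSubmodule.mem_top y)
  have ha5 : π ⁅a, ⁅a, ⁅a, b⁆⁆⁆ = 0 := by
    simp only [LieHom.map_lie, ha, hb]; ext <;> simp [ModelL.lie_def]
  have ha6 : π ⁅a, ⁅b, ⁅a, b⁆⁆⁆ = 0 := by
    simp only [LieHom.map_lie, ha, hb]; ext <;> simp [ModelL.lie_def]
  have ha7 : π ⁅b, ⁅b, ⁅a, b⁆⁆⁆ = 0 := by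
    simp only [LieHom.map_lie, ha, hb]; ext <;> simp [ModelL.lie_def]
  obtain ⟨ψ, hψ⟩ := exists_hom_of_central (K := K) (q a) (q b)
    (by have := hcen _ ha5; simpa only [LieHom.map_lie] using this)
    (by have := hcen _ ha6; simpa only [LieHom.map_lie] using this)
    (by have := hcen _ ha7; simpa only [LieHom.map_lie] using this)
  -- `ψ ∘ φ` and `q` differ by central elements
  have hdiff : ∀ w, ∃ r, π r = 0 ∧ ψ (φ w) = q w + q r := by
    intro w
    let z := φ w
    refine ⟨z 0 • a + z 1 • b + z 2 • ⁅a, b⁆ + z 3 • ⁅a, ⁅a, b⁆⁆ + z 4 • ⁅b, ⁅a, b⁆⁆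
      + z 5 • ⁅a, ⁅a, ⁅a, b⁆⁆⁆ + z 6 • ⁅a, ⁅b, ⁅a, b⁆⁆⁆ + z 7 • ⁅b, ⁅b, ⁅a, b⁆⁆⁆ - w, ?_, ?_⟩
    · simp only [map_sub, map_add, map_smul, ha5, ha6, ha7]
      simp only [LieHom.map_lie, ha, hb]
      ext <;> simp [ModelL.lie_def, z, hc0, hc1, hc2, hc3, hc4]
    · rw [hψ]
      simp only [map_sub, map_add, map_smul, LieHom.map_lie]
      simp only [z]
      abel
  have hlie : ∀ u v : FreeLieAlgebra K X, ψ (φ ⁅u, v⁆) = q ⁅u, v⁆ := by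
    intro u v
    obtain ⟨r, hr, hr'⟩ := hdiff u
    obtain ⟨t, ht, ht'⟩ := hdiff v
    have h1 : ⁅q r, q v⁆ = 0 := by rw [← lie_skew, hcen r hr, neg_zero]
    rw [LieHom.map_lie, LieHom.map_lie, hr', ht', lie_add, hcen t ht, add_lie, h1,
      LieHom.map_lie, add_zero, add_zero]
  have hF2 : ∀ w ∈ LieModule.lowerCentralSeries K (FreeLieAlgebra K X) (FreeLieAlgebra K X) 1,
      ψ (φ w) = q w := by
    intro w hw
    rw [LieModule.lowerCentralSeries_succ, ← LieSubmodule.mem_toSubmodule,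
      LieSubmodule.lieIdeal_oper_eq_linear_span'] at hw
    induction hw using Submodule.span_induction with
    | mem x hx => obtain ⟨u, _, v, _, rfl⟩ := hx; exact hlie u v
    | zero => simp
    | add x y _ _ hx hy => simp only [map_add, hx, hy]
    | smul t x _ hx => simp only [map_smul, hx]
  have hJ : J ≤ φ.ker := by
    rw [LieSubmodule.lie_le_iff]
    intro r hr y _
    rw [LieHom.mem_ker] at hr ⊢
    rw [LieHom.map_lie]
    ext <;> simp [ModelE.lie_def, hc0, hc1, hc2, hc3, hc4, hr]
  let cmap : ModelE K →ₗ[K] (Fin 3 → K) :=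
    { toFun := fun z => ![z 5, z 6, z 7]
      map_add' := fun u v => by ext i; fin_cases i <;> rfl
      map_smul' := fun t v => by ext i; fin_cases i <;> rfl }
  unfold lieSchurMultiplierDim
  let F := FreeLieAlgebra K X
  let R : LieIdeal K F := π.ker
  let F2 : LieIdeal K F := LieModule.lowerCentralSeries K F F 1
  change Module.finrank K
    (↥((R ⊓ F2 : LieIdeal K F) : Submodule K F) ⧸
      (Submodule.comap ((R ⊓ F2 : LieIdeal K F) : Submodule K F).subtype
        ((⁅R, (⊤ : LieIdeal K F)⁆ : LieIdeal K F) : Submodule K F))) = 3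
  let f : ↥((R ⊓ F2 : LieIdeal K F) : Submodule K F) →ₗ[K] (Fin 3 → K) :=
    cmap ∘ₗ (φ : FreeLieAlgebra K X →ₗ[K] ModelE K) ∘ₗ
      ((R ⊓ F2 : LieIdeal K F) : Submodule K F).subtype
  have hf : Function.Surjective f := by
    intro v
    have hm : ∀ u v w z : F, ⁅u, ⁅v, ⁅w, z⁆⁆⁆ ∈ F2 := fun u v w z => lie_mem_lcs_one _ _
    refine ⟨⟨v 0 • ⁅a, ⁅a, ⁅a, b⁆⁆⁆ + v 1 • ⁅a, ⁅b, ⁅a, b⁆⁆⁆ + v 2 • ⁅b, ⁅b, ⁅a, b⁆⁆⁆, ?_⟩, ?_⟩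
    · refine (LieSubmodule.mem_inf _ _ _).2 ⟨?_, ?_⟩
      · refine LieHom.mem_ker.2 ?_
        simp only [map_add, map_smul, ha5, ha6, ha7]
        simp
      · exact add_mem (add_mem (F2.smul_mem _ (hm _ _ _ _)) (F2.smul_mem _ (hm _ _ _ _)))
          (F2.smul_mem _ (hm _ _ _ _))
    · change cmap (φ (v 0 • ⁅a, ⁅a, ⁅a, b⁆⁆⁆ + v 1 • ⁅a, ⁅b, ⁅a, b⁆⁆⁆ + v 2 • ⁅b, ⁅b, ⁅a, b⁆⁆⁆)) = v
      simp only [map_add, map_smul, LieHom.map_lie]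
      ext i
      fin_cases i <;> simp [cmap, ModelE.lie_def, hc0, hc1, ha, hb]
  have hker : LinearMap.ker f =
      Submodule.comap ((R ⊓ F2 : LieIdeal K F) : Submodule K F).subtype
        ((⁅R, (⊤ : LieIdeal K F)⁆ : LieIdeal K F) : Submodule K F) := by
    ext ⟨w, hw⟩
    have hw' := (LieSubmodule.mem_inf _ _ _).1 hw
    have hwR : π w = 0 := LieHom.mem_ker.1 hw'.1
    rw [LinearMap.mem_ker, Submodule.mem_comap]
    change ![φ w 5, φ w 6, φ w 7] = 0 ↔ w ∈ J
    constructor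
    · intro h
      have h5 : φ w 5 = 0 := congrFun h 0
      have h6 : φ w 6 = 0 := congrFun h 1
      have h7 : φ w 7 = 0 := congrFun h 2
      have h0 : φ w = 0 := by
        ext <;> simp [hc0, hc1, hc2, hc3, hc4, hwR, h5, h6, h7]
      rw [← hq0, ← hF2 w hw'.2, h0, map_zero]
    · intro h
      have h0 : φ w = 0 := LieHom.mem_ker.1 (hJ h)
      rw [h0]
      ext i; fin_cases i <;> simp
  rw [← hker, (f.quotKerEquivOfSurjective hf).finrank_eq]
  simp

end proofs

/-- `L_{5,9}` is nilpotent of class `3` with `dim L² = 3`, its Schur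
multiplier has dimension `3`, and with `n = 5`, `m = 3`, `c = 3` this equals
`(1/2)(n−m−1)(n+m) − Σ_{i=2}^{min(n−m,c)} (n−m−i) − 1`. -/
theorem schur_multiplier_L59 (K : Type) [Field K] :
    Module.finrank K (lieL59 K) = 5 ∧ lieDerivedDim K (lieL59 K) = 3 ∧
    lieNilpotencyClass K (lieL59 K) 3 ∧
    (∀ (X : Type) (π : FreeLieAlgebra K X →ₗ⁅K⁆ lieL59 K), Function.Surjective π →
      lieSchurMultiplierDim K X π = 3) ∧
    (3 : ℤ) = raiBound 5 3 3 - 1 := by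
  obtain ⟨e⟩ := lieL59_equiv K
  refine ⟨?_, ?_, class_equiv e class_modelL, fun X π hπ => ?_, by decide⟩
  · rw [← e.toLinearEquiv.finrank_eq]
    exact Module.finrank_fin_fun K
  · rw [derivedDim_equiv e, derivedDim_modelL]
  · rw [← schurDim_equiv e.symm]
    exact schurDim_modelL X _ (e.symm.surjective.comp hπ)
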